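/- Let G be an even, real-valued extremizer of the problem defining 𝒞(∞) with G(0) = 1 (i.e., G ∈ ℰ, G(0) = 1, and 1/‖G‖₁ = 𝒞(∞)). Then for every F ∈ ℰ, the identity 𝒞(∞) · ∫_ℝ sgn(G(x)) F(x) dx = F(0) holds, where sgn denotes the sign function. -/

import Mathlib

open MeasureTheory Filter
open scoped FourierTransform Real

/-- The class 𝒜 sharp constant 𝒞(A). -/
noncomputable def Ccal (A : ℝ) : ℝ :=
  sSup { r : ℝ | ∃ F : ℝ → ℂ, Continuous F ∧ Integrable F ∧ F ≠ 0 ∧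
    r = (‖F 0‖ - A * ∫ t in {t : ℝ | 1 ≤ |t|}, ‖𝓕 F t‖) / ∫ x : ℝ, ‖F x‖ }

/-- 𝒞(∞), over the bandlimited class ℰ. -/
noncomputable def CcalInf : ℝ :=
  sSup { r : ℝ | ∃ F : ℝ → ℂ, Continuous F ∧ Integrable F ∧ F ≠ 0 ∧
    Function.support (𝓕 F) ⊆ Set.Icc (-1 : ℝ) 1 ∧
    r = ‖F 0‖ / ∫ x : ℝ, ‖F x‖ }

/-- Fourier transform of a real-valued function, as a real number (its real part). -/
noncomputable def FTr (F : ℝ → ℝ) (t : ℝ) : ℝ := (𝓕 (fun x => (F x : ℂ)) t).re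

/-- The class 𝒜⁺ sharp constant 𝒞⁺(A). -/
noncomputable def CcalPlus (A : ℝ) : ℝ :=
  sSup { r : ℝ | ∃ F : ℝ → ℝ, Continuous F ∧ Integrable F ∧ F ≠ 0 ∧ (∀ x, F (-x) = F x) ∧
    r = (F 0 - A * ∫ t in {t : ℝ | 1 ≤ |t|}, max (FTr F t) 0) / ∫ x : ℝ, |F x| }

/-- 𝒞⁺(∞), over the class ℰ⁺. -/
noncomputable def CcalPlusInf : ℝ :=
  sSup { r : ℝ | ∃ F : ℝ → ℝ, Continuous F ∧ Integrable F ∧ F ≠ 0 ∧ (∀ x, F (-x) = F x) ∧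
    (∀ t : ℝ, 1 ≤ |t| → FTr F t ≤ 0) ∧
    r = F 0 / ∫ x : ℝ, |F x| }

/-- The prime counting function at a real argument. -/
noncomputable def primePi (x : ℝ) : ℕ := Nat.primeCounting ⌊x⌋₊

/-- The Brun–Titchmarsh constant 𝐁. -/
noncomputable def BrunTitchmarsh : ℝ :=
  limsup (fun x : ℝ =>
    ((primePi (x + Real.sqrt x) : ℝ) - (primePi x : ℝ)) / (Real.sqrt x / Real.log x)) atTop

/-- The Fourier–Laplace transform of a function supported in `[-1, 1]` is entire. -/
lemma differentiable_integral_exp_mul {g : ℝ → ℂ} (hg : Integrable g)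
    (hs : Function.support g ⊆ Set.Icc (-1 : ℝ) 1) :
    Differentiable ℂ fun z : ℂ => ∫ t : ℝ, Complex.exp (2 * π * Complex.I * t * z) * g t := by
  intro z₀
  have exp_bound : ∀ (t : ℝ) (z : ℂ), t ∈ Set.Icc (-1 : ℝ) 1 →
      ‖Complex.exp (2 * π * Complex.I * t * z)‖ ≤ Real.exp (2 * π * ‖z‖) := by
    intro t z ht
    refine (Complex.norm_exp_le_exp_norm _).trans (Real.exp_le_exp.2 ?_)
    have ht' : |t| ≤ 1 := abs_le.2 ht
    simp only [norm_mul, Complex.norm_I, Complex.norm_real, Real.norm_eq_abs, Complex.norm_ofNat,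
      abs_of_pos Real.pi_pos, mul_one]
    calc 2 * π * |t| * ‖z‖ ≤ 2 * π * 1 * ‖z‖ := by gcongr
      _ = 2 * π * ‖z‖ := by ring
  have meas : ∀ z : ℂ, AEStronglyMeasurable
      (fun t : ℝ => Complex.exp (2 * π * Complex.I * t * z) * g t) := fun z =>
    (by fun_prop : Continuous fun t : ℝ => Complex.exp (2 * π * Complex.I * t * z)
      ).aestronglyMeasurable.mul hg.aestronglyMeasurable
  refine (hasDerivAt_integral_of_dominated_loc_of_deriv_le (μ := volume)
    (F := fun (z : ℂ) (t : ℝ) => Complex.exp (2 * π * Complex.I * t * z) * g t)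
    (F' := fun (z : ℂ) (t : ℝ) =>
      Complex.exp (2 * π * Complex.I * t * z) * (2 * π * Complex.I * t) * g t)
    (bound := fun t => Real.exp (2 * π * (‖z₀‖ + 1)) * (2 * π) * ‖g t‖)
    (Metric.ball_mem_nhds z₀ one_pos) (Eventually.of_forall meas) ?_ ?_ ?_ ?_ ?_
    ).2.differentiableAt
  · refine (hg.norm.const_mul (Real.exp (2 * π * ‖z₀‖))).mono' (meas z₀)
      (Eventually.of_forall fun t => ?_)
    by_cases h : g t = 0
    · simp [h]
    · rw [norm_mul]
      gcongr
      exact exp_bound t z₀ (hs h)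
  · exact (by fun_prop : Continuous fun t : ℝ =>
      Complex.exp (2 * π * Complex.I * t * z₀) * (2 * π * Complex.I * t)
      ).aestronglyMeasurable.mul hg.aestronglyMeasurable
  · refine Eventually.of_forall fun t z hz => ?_
    by_cases h : g t = 0
    · simp [h]
    · have hz' : ‖z‖ ≤ ‖z₀‖ + 1 := by
        have h1 : ‖z - z₀‖ < 1 := by simpa [dist_eq_norm] using hz
        have h2 := norm_le_norm_add_norm_sub' z z₀
        linarith
      have ht' : |t| ≤ 1 := abs_le.2 (hs h)
      rw [norm_mul, norm_mul]
      gcongr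
      · refine (exp_bound t z (hs h)).trans ?_
        gcongr
      · simp only [norm_mul, Complex.norm_I, Complex.norm_real, Real.norm_eq_abs,
          Complex.norm_ofNat, abs_of_pos Real.pi_pos, mul_one]
        exact mul_le_of_le_one_right (by positivity) ht'
  · exact hg.norm.const_mul _
  · refine Eventually.of_forall fun t z _ => ?_
    have h := ((hasDerivAt_id z).const_mul (2 * π * Complex.I * t : ℂ)).cexp.mul_const (g t)
    simpa using h

/-- A nonzero band-limited function vanishes only on a null set. -/
lemma ae_ne_zero_of_support_fourier_subset {f : ℝ → ℂ} (hc : Continuous f) (hi : Integrable f)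
    (hs : Function.support (𝓕 f) ⊆ Set.Icc (-1 : ℝ) 1) {x₀ : ℝ} (hx₀ : f x₀ ≠ 0) :
    ∀ᵐ x, f x ≠ 0 := by
  have hFc : Continuous (𝓕 f) :=
    VectorFourier.fourierIntegral_continuous Real.continuous_fourierChar
      (by exact continuous_inner) hi
  have hFi : Integrable (𝓕 f) :=
    hFc.integrable_of_hasCompactSupport (HasCompactSupport.of_support_subset_isCompact
      isCompact_Icc hs)
  have hrep : ∀ x : ℝ, f x = ∫ t : ℝ, Complex.exp (2 * π * Complex.I * t * x) * 𝓕 f t := by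
    intro x
    conv_lhs => rw [← hc.fourierInv_fourier_eq hi hFi]
    rw [Real.fourierInv_eq']
    congr 1 with t
    simp only [RCLike.inner_apply, conj_trivial, smul_eq_mul]
    congr 2
    push_cast
    ring
  have hent := differentiable_integral_exp_mul hFi hs
  have hana : AnalyticOnNhd ℝ f Set.univ := by
    intro x _
    have h1 := (hent.analyticAt (x : ℂ)).restrictScalars (𝕜 := ℝ)
    have h2 := h1.comp (Complex.ofRealCLM.analyticAt x)
    exact h2.congr (Eventually.of_forall fun y => (hrep y).symm)
  have := ae_restrict_le_codiscreteWithin (μ := (volume : Measure ℝ)) MeasurableSet.univ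
    (hana.preimage_zero_mem_codiscrete hx₀)
  rw [Measure.restrict_univ] at this
  exact this

/-- Derivative of the modulus at a nonzero real number, in a complex direction. -/
lemma hasDerivAt_norm_ofReal_add_mul {g : ℝ} (hg : g ≠ 0) (w : ℂ) :
    HasDerivAt (fun ε : ℝ => ‖(g : ℂ) + ε * w‖) (Real.sign g * w.re) 0 := by
  have h1 : HasDerivAt (fun ε : ℝ => (g + ε * w.re) ^ 2 + (ε * w.im) ^ 2) (2 * g * w.re) 0 := by
    have ha := (((hasDerivAt_id (0 : ℝ)).mul_const w.re).const_add g).pow 2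
    have hb := ((hasDerivAt_id (0 : ℝ)).mul_const w.im).pow 2
    exact (ha.add hb).congr_deriv (by simp)
  have h2 := h1.sqrt (by simpa using hg)
  have hfun : (fun ε : ℝ => ‖(g : ℂ) + ε * w‖) =
      fun ε : ℝ => √((g + ε * w.re) ^ 2 + (ε * w.im) ^ 2) := by
    funext ε
    rw [Complex.norm_eq_sqrt_sq_add_sq]
    simp
  rw [hfun]
  refine h2.congr_deriv ?_
  simp only [zero_mul, add_zero, ne_eq, OfNat.ofNat_ne_zero, not_false_eq_true, zero_pow,
    Real.sqrt_sq_eq_abs]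
  rcases lt_or_gt_of_ne hg with h | h
  · rw [Real.sign_of_neg h, abs_of_neg h]
    field_simp
  · rw [Real.sign_of_pos h, abs_of_pos h]
    field_simp

lemma measurable_real_sign : Measurable Real.sign := by
  unfold Real.sign
  exact Measurable.ite measurableSet_Iio measurable_const
    (Measurable.ite measurableSet_Ioi measurable_const measurable_const)

/-- Derivative of the `L¹` norm at a real function that vanishes only on a null set. -/
lemma hasDerivAt_integral_norm_ofReal_add_mul {G : ℝ → ℝ} {F : ℝ → ℂ} (hG : Integrable G)
    (hF : Integrable F) (hne : ∀ᵐ x, G x ≠ 0) :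
    HasDerivAt (fun ε : ℝ => ∫ x, ‖(G x : ℂ) + ε * F x‖)
      (∫ x, Real.sign (G x) * (F x).re) 0 := by
  refine (hasDerivAt_integral_of_dominated_loc_of_lip (μ := volume)
    (F := fun (ε : ℝ) (x : ℝ) => ‖(G x : ℂ) + ε * F x‖) (bound := fun x => ‖F x‖)
    (s := Set.univ) univ_mem ?_ ?_ ?_ ?_ hF.norm ?_).2
  · exact Eventually.of_forall fun ε => (hG.ofReal.add (hF.const_mul (ε : ℂ))).norm.1
  · simpa using hG.abs
  · exact (measurable_real_sign.comp_aemeasurable hG.1.aemeasurable).aestronglyMeasurable.mul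
      hF.re.1
  · refine Eventually.of_forall fun x => LipschitzOnWith.of_dist_le_mul fun a _ b _ => ?_
    rw [Real.coe_nnabs, abs_of_nonneg (norm_nonneg _), Real.dist_eq, Real.dist_eq]
    refine (abs_norm_sub_norm_le _ _).trans (le_of_eq ?_)
    rw [add_sub_add_left_eq_sub, ← sub_mul, norm_mul, ← Complex.ofReal_sub, Complex.norm_real,
      Real.norm_eq_abs, mul_comm]
  · filter_upwards [hne] with x hx using hasDerivAt_norm_ofReal_add_mul hx (F x)

/-- The `L¹` norm of a nonzero continuous integrable function is positive. -/
lemma integral_norm_pos_of_continuous {H : ℝ → ℂ} (hc : Continuous H) (hi : Integrable H)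
    (h0 : H ≠ 0) : 0 < ∫ x, ‖H x‖ := by
  refine (integral_nonneg fun x => norm_nonneg _).lt_of_ne fun h => h0 ?_
  have h1 := (integral_eq_zero_iff_of_nonneg (fun x => norm_nonneg (H x)) hi.norm).1 h.symm
  have h2 := (Continuous.ae_eq_iff_eq volume hc.norm continuous_const).1 h1
  funext x
  exact norm_eq_zero.1 (congrFun h2 x)

/-- The inequality defining `𝒞(∞)`, provided the defining supremum is not a junk value. -/
lemma norm_apply_zero_le_CcalInf_mul (hC : CcalInf ≠ 0) {H : ℝ → ℂ} (hc : Continuous H)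
    (hi : Integrable H) (hs : Function.support (𝓕 H) ⊆ Set.Icc (-1 : ℝ) 1) :
    ‖H 0‖ ≤ CcalInf * ∫ x, ‖H x‖ := by
  by_cases h0 : H = 0
  · simp [h0]
  · have hbdd : BddAbove { r : ℝ | ∃ F : ℝ → ℂ, Continuous F ∧ Integrable F ∧ F ≠ 0 ∧
        Function.support (𝓕 F) ⊆ Set.Icc (-1 : ℝ) 1 ∧ r = ‖F 0‖ / ∫ x : ℝ, ‖F x‖ } := by
      by_contra hb
      exact hC (Real.sSup_of_not_bddAbove hb)
    rw [← div_le_iff₀ (integral_norm_pos_of_continuous hc hi h0)]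
    exact le_csSup hbdd ⟨H, hc, hi, h0, hs, rfl⟩

/-- A linear combination of band-limited functions is band-limited. -/
lemma support_fourier_add_const_mul_subset {f g : ℝ → ℂ} {s : Set ℝ} (hf : Integrable f)
    (hg : Integrable g) (hfs : Function.support (𝓕 f) ⊆ s) (hgs : Function.support (𝓕 g) ⊆ s)
    (c : ℂ) : Function.support (𝓕 fun x => f x + c * g x) ⊆ s := by
  have h : (𝓕 fun x => f x + c * g x) = 𝓕 f + c • 𝓕 g := by
    have h1 : (𝓕 (f + c • g)) = 𝓕 f + 𝓕 (c • g) :=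
      VectorFourier.fourierIntegral_add Real.continuous_fourierChar
        (by exact continuous_inner) hf (hg.smul c)
    have h2 : 𝓕 (c • g) = c • 𝓕 g := VectorFourier.fourierIntegral_const_smul _ _ _ _ _
    rw [← h2, ← h1]
    rfl
  rw [h]
  exact (Function.support_add _ _).trans
    (Set.union_subset hfs ((Function.support_const_smul_subset c _).trans hgs))

/-- The real part of the sign identity: the first variation of `‖G + ε F‖₁` at `ε = 0`. -/
lemma CcalInf_mul_integral_sign_mul_re {G : ℝ → ℝ} (hGc : Continuous G) (hGi : Integrable G)
    (hGs : Function.support (𝓕 (fun x => (G x : ℂ))) ⊆ Set.Icc (-1 : ℝ) 1)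
    (hG0 : G 0 = 1) (hGext : 1 / (∫ x : ℝ, |G x|) = CcalInf)
    {F : ℝ → ℂ} (hFc : Continuous F) (hFi : Integrable F)
    (hFs : Function.support (𝓕 F) ⊆ Set.Icc (-1 : ℝ) 1) :
    CcalInf * ∫ x, Real.sign (G x) * (F x).re = (F 0).re := by
  have hcG : Continuous fun x => (G x : ℂ) := by fun_prop
  have hG0' : ((G 0 : ℝ) : ℂ) ≠ 0 := by simp [hG0]
  have hpos : 0 < ∫ x, |G x| := by
    simpa using integral_norm_pos_of_continuous hcG hGi.ofReal fun h => hG0' (congrFun h 0)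
  have hC : CcalInf ≠ 0 := hGext ▸ (one_div_pos.2 hpos).ne'
  have hCG : CcalInf * ∫ x, |G x| = 1 := by
    rw [← hGext]
    field_simp
  have hne : ∀ᵐ x, G x ≠ 0 := by
    filter_upwards [ae_ne_zero_of_support_fourier_subset hcG hGi.ofReal hGs hG0'] with x hx
    exact_mod_cast hx
  have hderiv := ((hasDerivAt_integral_norm_ofReal_add_mul hGi hFi hne).const_mul CcalInf).sub
    (((hasDerivAt_id (0 : ℝ)).mul_const (F 0).re).const_add 1)
  have hmin : IsLocalMin ((fun ε : ℝ => CcalInf * ∫ x, ‖(G x : ℂ) + ε * F x‖) -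
      fun ε : ℝ => 1 + id ε * (F 0).re) 0 := by
    refine Eventually.of_forall fun ε => ?_
    have h1 := norm_apply_zero_le_CcalInf_mul hC (H := fun x => (G x : ℂ) + ε * F x)
      (hcG.add (continuous_const.mul hFc)) (hGi.ofReal.add (hFi.const_mul (ε : ℂ)))
      (support_fourier_add_const_mul_subset hGi.ofReal hFi hGs hFs (ε : ℂ))
    have h2 := (Complex.re_le_norm _).trans h1
    simp only [hG0, Complex.ofReal_one, Complex.add_re, Complex.one_re, Complex.re_ofReal_mul]
      at h2
    simp [hCG]
    linarith
  have := hmin.hasDerivAt_eq_zero hderiv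
  linarith

/-- Variational characterization: the extremizer G of 𝒞(∞) with G(0) = 1 satisfies
𝒞(∞) ∫ sgn(G(x)) F(x) dx = F(0) for every F ∈ ℰ. -/
theorem extremizer_sign_identity
    (G : ℝ → ℝ) (hGc : Continuous G) (hGi : Integrable G)
    (hGe : ∀ x, G (-x) = G x)
    (hGs : Function.support (𝓕 (fun x => (G x : ℂ))) ⊆ Set.Icc (-1 : ℝ) 1)
    (hG0 : G 0 = 1)
    (hGext : 1 / (∫ x : ℝ, |G x|) = CcalInf) :
    ∀ F : ℝ → ℂ, Continuous F → Integrable F →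
      Function.support (𝓕 F) ⊆ Set.Icc (-1 : ℝ) 1 →
      (CcalInf : ℂ) * ∫ x : ℝ, (Real.sign (G x) : ℂ) * F x = F 0 := by
  intro F hFc hFi hFs
  have hre := CcalInf_mul_integral_sign_mul_re hGc hGi hGs hG0 hGext hFc hFi hFs
  have him := CcalInf_mul_integral_sign_mul_re hGc hGi hGs hG0 hGext
    (F := fun x => -Complex.I * F x) (continuous_const.mul hFc) (hFi.const_mul (-Complex.I))
    (by
      simpa using support_fourier_add_const_mul_subset (integrable_zero ℝ ℂ volume) hFi
        (by simp [Real.fourier_eq']) hFs (-Complex.I))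
  have hint : Integrable fun x => (Real.sign (G x) : ℂ) * F x := by
    refine hFi.bdd_mul (c := 1) ?_ (Eventually.of_forall fun x => ?_)
    · exact (Complex.measurable_ofReal.comp
        (measurable_real_sign.comp hGc.measurable)).aestronglyMeasurable
    · rcases Real.sign_apply_eq (G x) with h | h | h <;> simp [h]
  apply Complex.ext
  · rw [Complex.re_ofReal_mul, ← hre]
    have := integral_re hint
    simp only [RCLike.re_to_complex, Complex.re_ofReal_mul] at this
    rw [this]
  · rw [Complex.im_ofReal_mul]
    have := integral_im hint
    simp only [RCLike.im_to_complex, Complex.im_ofReal_mul] at this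
    rw [← this]
    simpa using him
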